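/- Let α be a positive word and ν ∈ Λ* with |α| < |ν|. If ν = α·r for some positive word r, then S_ν S_ν* S_α = S_ν S_r*; if ν is not of the form α·r for any positive word r, then S_ν S_ν* S_α = 0. -/

import Mathlib

open ContinuousLinearMap

/-- For a positive word `μ = μ₁…μ_k` over the alphabet `{1,…,n}`,
`Sw S μ = S_{μ₁} ⋯ S_{μ_k}`, with `Sw S [] = 1`. -/
noncomputable def Sw {H : Type*} [NormedAddCommGroup H] [InnerProductSpace ℂ H]
    {n : ℕ} (S : Fin n → H →L[ℂ] H) (μ : List (Fin n)) : H →L[ℂ] H :=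
  (μ.map S).prod

/-! If `b` is a partial isometry and `star a * a` commutes with `b * star b`, the initial projection
of `a` can be moved past the range projection of `b`. This makes every word a partial isometry and
gives `ab(ab)⋆a = a b b⋆`, the case `ν = αr`. If neither of `ν`, `α` is a prefix of the other, they
are `c i ν'` and `c j α'` with `i ≠ j`; moving the initial projection of `S_c` out of the way in
`S_ν⋆ S_α` brings the factor `S_i⋆ S_j` together, and this vanishes because the range projections
of the generators add up to at most `1`. -/

/-- Partial isometries of a semigroup with involution. For bounded operators on a Hilbert space
these are the operators that are isometric on the orthogonal complement of their kernel. -/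
def IsPartialIsometry {A : Type*} [Mul A] [Star A] (a : A) : Prop :=
  a * star a * a = a

namespace IsPartialIsometry

theorem one {A : Type*} [Monoid A] [StarMul A] : IsPartialIsometry (1 : A) := by
  simp [IsPartialIsometry]

section Semigroup

variable {A : Type*} [Semigroup A] [StarMul A] {a b : A}

theorem star_mul_self_mul_star (ha : IsPartialIsometry a) : star a * a * star a = star a := by
  simpa only [star_mul, star_star, mul_assoc] using congrArg star ha

theorem mul_mul_star_mul_self (ha : IsPartialIsometry a)
    (hab : Commute (star a * a) (b * star b)) :
    a * b * star (a * b) * a = a * b * star b :=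
  calc
    a * b * star (a * b) * a = a * ((b * star b) * (star a * a)) := by
      simp only [star_mul, mul_assoc]
    _ = (a * star a * a) * (b * star b) := by
      rw [← hab.eq]; simp only [mul_assoc]
    _ = a * b * star b := by rw [ha, mul_assoc]

theorem mul (ha : IsPartialIsometry a) (hb : IsPartialIsometry b)
    (hab : Commute (star a * a) (b * star b)) : IsPartialIsometry (a * b) :=
  calc
    a * b * star (a * b) * (a * b) = a * b * star (a * b) * a * b :=
      (mul_assoc _ _ _).symm
    _ = a * (b * star b * b) := by
      rw [ha.mul_mul_star_mul_self hab]; simp only [mul_assoc]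
    _ = a * b := by rw [hb]

end Semigroup

theorem star_mul_mul_mul_eq_zero {A : Type*} [SemigroupWithZero A] [StarMul A] {a b d : A}
    (hb : IsPartialIsometry b) (hab : Commute (star a * a) (b * star b))
    (hbd : star b * d = 0) : star (a * b) * (a * d) = 0 :=
  calc
    star (a * b) * (a * d) = star b * (star a * a) * d := by
      simp only [star_mul, mul_assoc]
    _ = star b * b * star b * (star a * a) * d := by rw [hb.star_mul_self_mul_star]
    _ = star b * ((b * star b) * (star a * a)) * d := by simp only [mul_assoc]
    _ = star b * (star a * a) * b * (star b * d) := by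
      rw [← hab.eq]; simp only [mul_assoc]
    _ = 0 := by rw [hbd, mul_zero]

theorem star_mul_eq_zero_of_sum_le_one {A ι : Type*} [NormedRing A] [StarRing A] [CStarRing A]
    [PartialOrder A] [StarOrderedRing A] [Fintype ι] {S : ι → A} {i j : ι}
    (hSj : IsPartialIsometry (S j)) (hS : ∑ k, S k * star (S k) ≤ 1) (hij : i ≠ j) :
    star (S i) * S j = 0 := by
  let f k := star (star (S k) * S j) * (star (S k) * S j)
  have f_nonneg k : 0 ≤ f k := star_mul_self_nonneg _
  have f_self : f j = star (S j) * S j := by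
    simpa only [f, star_mul, star_star, mul_assoc] using congrArg (star (S j) * ·) hSj
  have sum_f_le : ∑ k, f k ≤ f j := by
    rw [f_self]
    simpa only [f, Finset.mul_sum, Finset.sum_mul, star_mul, star_star, mul_assoc, one_mul]
      using star_left_conjugate_le_conjugate hS (S j)
  have f_add_le : f i + f j ≤ f j :=
    (Finset.add_le_sum (fun k _ => f_nonneg k) (Finset.mem_univ i) (Finset.mem_univ j) hij).trans
      sum_f_le
  exact CStarRing.star_mul_self_eq_zero_iff _ |>.mp
    (le_antisymm (add_le_iff_nonpos_left.mp f_add_le) (f_nonneg i))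

end IsPartialIsometry

theorem exists_append_cons_ne {ι : Type*} {μ ν : List ι} (hμν : ¬ μ <+: ν)
    (hνμ : ¬ ν <+: μ) :
    ∃ c i j μ' ν', i ≠ j ∧ μ = c ++ i :: μ' ∧ ν = c ++ j :: ν' := by
  induction μ generalizing ν with
  | nil => simp at hμν
  | cons i μ ih =>
    cases ν with
    | nil => simp at hνμ
    | cons j ν =>
      by_cases hij : i = j
      · subst hij
        rw [List.prefix_cons_inj] at hμν hνμ
        obtain ⟨c, k, l, μ', ν', hkl, rfl, rfl⟩ := ih hμν hνμ
        exact ⟨i :: c, k, l, μ', ν', hkl, rfl, rfl⟩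
      · exact ⟨[], i, j, μ, ν, hij, rfl, rfl⟩

/-- The product `S_{μ₁} ⋯ S_{μ_k}` along a word `μ = μ₁…μ_k`, in an arbitrary monoid and over an
arbitrary alphabet; `Sw` is the case of bounded operators. -/
def wordProd {A ι : Type*} [Monoid A] (S : ι → A) (μ : List ι) : A :=
  (μ.map S).prod

section Monoid

variable {A ι : Type*} [Monoid A] {S : ι → A}

theorem wordProd_nil (S : ι → A) : wordProd S [] = 1 := rfl

theorem wordProd_cons (S : ι → A) (i : ι) (μ : List ι) :
    wordProd S (i :: μ) = S i * wordProd S μ := by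
  simp [wordProd]

theorem wordProd_append (S : ι → A) (μ η : List ι) :
    wordProd S (μ ++ η) = wordProd S μ * wordProd S η := by
  simp [wordProd]

/-- Condition (M2) localized at a word `ν`: the initial projection of `S_μ` and the range projection
of `S_η` are required to commute only when `μ` and `η` are adjacent subwords of `ν`. -/
def HasCommutingProjections [Star A] (S : ι → A) (ν : List ι) : Prop :=
  ∀ μ η, μ ++ η <:+: ν →
    Commute (star (wordProd S μ) * wordProd S μ) (wordProd S η * star (wordProd S η))

theorem HasCommutingProjections.mono [Star A] {μ ν : List ι}
    (hν : HasCommutingProjections S ν) (hμν : μ <:+: ν) : HasCommutingProjections S μ :=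
  fun κ η h => hν κ η (h.trans hμν)

theorem HasCommutingProjections.of_mem_factorClosed [Star A] {Λ : Set (List ι)}
    (hΛ : ∀ ν ∈ Λ, ∀ w : List ι, w <:+: ν → w ∈ Λ)
    (hcomm : ∀ μ ∈ Λ, ∀ ν ∈ Λ,
      Commute (wordProd S μ * star (wordProd S μ)) (star (wordProd S ν) * wordProd S ν))
    {ν : List ι} (hν : ν ∈ Λ) : HasCommutingProjections S ν := fun μ η h =>
  have hμ : μ ∈ Λ := hΛ ν hν μ ((List.prefix_append μ η).isInfix.trans h)
  have hη : η ∈ Λ := hΛ ν hν η ((List.suffix_append μ η).isInfix.trans h)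
  (hcomm η hη μ hμ).symm

theorem HasCommutingProjections.isPartialIsometry_wordProd [StarMul A]
    (hS : ∀ i, IsPartialIsometry (S i)) {ν : List ι} (hν : HasCommutingProjections S ν) :
    IsPartialIsometry (wordProd S ν) := by
  induction ν with
  | nil => exact .one
  | cons i ν ih =>
    have hcomm := hν [i] ν (List.infix_refl _)
    rw [wordProd_cons, wordProd_nil, mul_one] at hcomm
    rw [wordProd_cons]
    exact (hS i).mul (ih (hν.mono (List.suffix_cons i ν).isInfix)) hcomm

end Monoid

section MonoidWithZero

variable {A ι : Type*} [MonoidWithZero A] [StarMul A] {S : ι → A} {α ν : List ι}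

theorem star_wordProd_mul_wordProd_eq_zero
    (hS : ∀ i, IsPartialIsometry (S i)) (horth : Pairwise fun i j => star (S i) * S j = 0)
    (hν : HasCommutingProjections S ν) (hαν : ¬ α <+: ν) (hνα : ¬ ν <+: α) :
    star (wordProd S ν) * wordProd S α = 0 := by
  obtain ⟨c, i, j, ν', α', hij, rfl, rfl⟩ := exists_append_cons_ne hνα hαν
  have htail : star (wordProd S (i :: ν')) * wordProd S (j :: α') = 0 :=
    calc
      star (wordProd S (i :: ν')) * wordProd S (j :: α')
          = star (wordProd S ν') * (star (S i) * S j) * wordProd S α' := by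
        simp only [wordProd_cons, star_mul, mul_assoc]
      _ = 0 := by rw [horth hij, mul_zero, zero_mul]
  have hi : IsPartialIsometry (wordProd S (i :: ν')) :=
    (hν.mono (List.suffix_append c _).isInfix).isPartialIsometry_wordProd hS
  rw [wordProd_append, wordProd_append]
  exact hi.star_mul_mul_mul_eq_zero (hν c _ (List.infix_refl _)) htail

theorem stmt_4_general
    (hS : ∀ i, IsPartialIsometry (S i)) (horth : Pairwise fun i j => star (S i) * S j = 0)
    (hν : HasCommutingProjections S ν) :
    (∀ r, ν = α ++ r →
      wordProd S ν * star (wordProd S ν) * wordProd S α = wordProd S ν * star (wordProd S r)) ∧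
    (¬ α <+: ν → ¬ ν <+: α → wordProd S ν * star (wordProd S ν) * wordProd S α = 0) := by
  constructor
  · rintro r rfl
    have hα : IsPartialIsometry (wordProd S α) :=
      (hν.mono (List.prefix_append α r).isInfix).isPartialIsometry_wordProd hS
    rw [wordProd_append]
    exact hα.mul_mul_star_mul_self (hν α r (List.infix_refl _))
  · intro hαν hνα
    rw [mul_assoc, star_wordProd_mul_wordProd_eq_zero hS horth hν hαν hνα, mul_zero]

end MonoidWithZero

theorem stmt_4 {H : Type*} [NormedAddCommGroup H] [InnerProductSpace ℂ H]
    [CompleteSpace H]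
    (n : ℕ) (hn : 1 ≤ n) (S : Fin n → H →L[ℂ] H)
    (hpi : ∀ i, S i * adjoint (S i) * S i = S i)
    (Λ : Set (List (Fin n)))
    (hΛe : ([] : List (Fin n)) ∈ Λ)
    (hΛg : ∀ i : Fin n, [i] ∈ Λ)
    (hΛsub : ∀ ν ∈ Λ, ∀ w : List (Fin n), w <:+: ν → w ∈ Λ)
    (hM1 : ∑ i, S i * adjoint (S i) = 1)
    (hM2 : ∀ μ ∈ Λ, ∀ ν ∈ Λ,
      Commute (Sw S μ * adjoint (Sw S μ)) (adjoint (Sw S ν) * Sw S ν))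
    (α ν : List (Fin n)) (hν : ν ∈ Λ) (hlen : α.length < ν.length) :
    (∀ r : List (Fin n), ν = α ++ r → Sw S ν * adjoint (Sw S ν) * Sw S α = Sw S ν * adjoint (Sw S r)) ∧
    ((∀ r : List (Fin n), ν ≠ α ++ r) → Sw S ν * adjoint (Sw S ν) * Sw S α = 0) := by
  have horth : Pairwise fun i j => star (S i) * S j = 0 := fun _ j hij =>
    IsPartialIsometry.star_mul_eq_zero_of_sum_le_one (hpi j) hM1.le hij
  have hcomm : HasCommutingProjections S ν := .of_mem_factorClosed hΛsub hM2 hν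
  obtain ⟨happend, hzero⟩ := stmt_4_general (α := α) hpi horth hcomm
  exact ⟨happend, fun h => hzero (fun ⟨r, hr⟩ => h r hr.symm) fun h => hlen.not_ge h.length_le⟩
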